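/- Suppose that for i = 1,2 there exist measures μᵢ* ∈ ca₊(Ωᵢ) such that μᵢ ≪ μᵢ* for all μᵢ ∈ Hᵢ°. Then H = {f ∈ L⁰₊(Ω) : π(f) ≤ 1}, where π(f) := sup{⟨f,μ⟩ : μ ∈ ca₊(Ω) with μ₁ ∈ H₁° and μ₂ ∈ H₂°}. In particular H = H°° and H° = {μ ∈ ca₊(Ω) : μ₁ ∈ H₁°, μ₂ ∈ H₂°}. -/

import Mathlib

/-!
The substantial inclusion is that `f` with `π(f) ≤ 1` is dominated by some `h₁ ⊕ h₂` of cost at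
most `1`. Write `Dom g c` if `g ≤ h₁ ⊕ h₂` with `∫ h₁ dμ₁ + ∫ h₂ dμ₂ ≤ c` for all admissible
marginals. The argument combines three ingredients.

* *Komlós-type compactness* (`forward_convex`, `komlos_pair`). Any sequence of `[0,∞]`-valued
  measurable functions has forward convex combinations converging almost everywhere; the limit of
  dominating pairs, set to `∞` on the exceptional null set, still dominates *pointwise*, and by
  Fatou its cost does not increase. The exceptional set is harmless exactly because all admissible
  marginals are absolutely continuous with respect to `νᵢ`. Hence `Dom · c` is stable under
  increasing limits.
* *Choquet capacitability* (`choquet_analytic`, `exists_compact_not_dom`). By this stability,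
  `¬ Dom · c` behaves like a capacity exceeding `c`. Applied to the graph of a Borel function `f`, an
  analytic set, capacitability yields a compact subset `Q` of the graph such that every continuous
  function lying strictly above `Q` still fails `Dom · c`.
* *Hahn–Banach and Riesz* (`dual_compact`). On a compact space, the open convex set of continuous
  functions with `Dom · c` for some `c < 1` is disjoint from the convex set of functions strictly
  above `Q`. The separating functional is a positive measure `μ`; regularity of `Hᵢ` puts its
  marginals in `Hᵢ°` (`mem_polar_of_continuous`), and reverse Fatou along continuous functions
  decreasing to `Q` (`exists_continuous_approx`) gives `∫ f dμ ≥ 1`.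

For the product space, exhaust it by compacts `Kₙ` and put `gₙ = (1 - 1/n) (f ∧ n)` on `Kₙ`. If `gₙ`
were not dominated at cost `1`, the measure above, pushed forward to the product, would satisfy
`1 ≤ (1 - 1/n) π(f) < 1`. The marginals are restricted to first mass at most `n` at stage `n`,
so that adding a small constant to `h₁` has a small cost; every finite measure is eventually
admitted. A last use of `komlos_pair` passes to the limit `n → ∞`.
-/

open MeasureTheory Filter ENNReal NNReal

section Defs

variable {Ω : Type*} [TopologicalSpace Ω] [MeasurableSpace Ω]

/-- The polar of a set `H` of `[0,∞]`-valued Borel functions: all finite positive Borel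
measures `μ` with `⟨f,μ⟩ = ∫ f dμ ≤ 1` for every `f ∈ H`. -/
def polar (H : Set (Ω → ℝ≥0∞)) : Set (Measure Ω) :=
  {μ | IsFiniteMeasure μ ∧ ∀ f ∈ H, ∫⁻ x, f x ∂μ ≤ 1}

/-- The bipolar of a set `H` of `[0,∞]`-valued Borel functions. -/
def bipolar (H : Set (Ω → ℝ≥0∞)) : Set (Ω → ℝ≥0∞) :=
  {f | Measurable f ∧ ∀ μ ∈ polar H, ∫⁻ x, f x ∂μ ≤ 1}

/-- `h` is (the coercion of) a bounded continuous real-valued function. -/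
def IsCb (h : Ω → ℝ≥0∞) : Prop :=
  Continuous h ∧ ∃ C : ℝ≥0, ∀ x, h x ≤ C

/-- `h` is (the coercion of) a bounded upper semicontinuous real-valued function. -/
def IsUb (h : Ω → ℝ≥0∞) : Prop :=
  UpperSemicontinuous h ∧ ∃ C : ℝ≥0, ∀ x, h x ≤ C

/-- `H` is monotone. -/
def MonotoneSet (H : Set (Ω → ℝ≥0∞)) : Prop :=
  ∀ f : Ω → ℝ≥0∞, Measurable f → (∃ h ∈ H, ∀ x, f x ≤ h x) → f ∈ H

/-- `H` is regular. -/
def RegularSet (H : Set (Ω → ℝ≥0∞)) : Prop :=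
  ∀ μ : Measure Ω, IsFiniteMeasure μ →
    sSup {x : ℝ≥0∞ | ∃ h ∈ H, IsUb h ∧ x = ∫⁻ ω, h ω ∂μ} =
      sSup {x : ℝ≥0∞ | ∃ h ∈ H, IsCb h ∧ x = ∫⁻ ω, h ω ∂μ}

/-- `H` is closed under `liminf`. -/
def LiminfClosed (H : Set (Ω → ℝ≥0∞)) : Prop :=
  ∀ h : ℕ → Ω → ℝ≥0∞, (∀ n, h n ∈ H) →
    (fun x => liminf (fun n => h n x) atTop) ∈ H

/-- `H` is convex. -/
def ConvexSet (H : Set (Ω → ℝ≥0∞)) : Prop :=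
  ∀ f ∈ H, ∀ g ∈ H, ∀ t : ℝ≥0∞, t ≤ 1 →
    (fun x => t * f x + (1 - t) * g x) ∈ H

/-- The sublinear pricing functional `π(f) = sup_{μ ∈ H°} ⟨f,μ⟩` associated with `H`. -/
noncomputable def priceH (H : Set (Ω → ℝ≥0∞)) (f : Ω → ℝ≥0∞) : ℝ≥0∞ :=
  sSup {x : ℝ≥0∞ | ∃ μ ∈ polar H, x = ∫⁻ ω, f ω ∂μ}

end Defs

section Transport

variable {Ω₁ Ω₂ : Type*}
  [TopologicalSpace Ω₁] [MeasurableSpace Ω₁]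
  [TopologicalSpace Ω₂] [MeasurableSpace Ω₂]

/-- The set `H` of all nonnegative Borel functions on the product space dominated by a sum
`h₁ ⊕ h₂` with `π₁(h₁) + π₂(h₂) ≤ 1`. -/
def transportSet (H₁ : Set (Ω₁ → ℝ≥0∞)) (H₂ : Set (Ω₂ → ℝ≥0∞)) :
    Set (Ω₁ × Ω₂ → ℝ≥0∞) :=
  {f | Measurable f ∧ ∃ (h₁ : Ω₁ → ℝ≥0∞) (h₂ : Ω₂ → ℝ≥0∞),
    Measurable h₁ ∧ Measurable h₂ ∧ (∀ ω, f ω ≤ h₁ ω.1 + h₂ ω.2) ∧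
    priceH H₁ h₁ + priceH H₂ h₂ ≤ 1}

/-- The finite positive Borel measures on the product space whose first marginal lies in
`H₁°` and whose second marginal lies in `H₂°`. -/
def marginalSet (H₁ : Set (Ω₁ → ℝ≥0∞)) (H₂ : Set (Ω₂ → ℝ≥0∞)) :
    Set (Measure (Ω₁ × Ω₂)) :=
  {μ | IsFiniteMeasure μ ∧ μ.map Prod.fst ∈ polar H₁ ∧ μ.map Prod.snd ∈ polar H₂}

/-- The transport functional
`π(f) = sup{⟨f,μ⟩ : μ ∈ ca₊(Ω₁ × Ω₂), μ₁ ∈ H₁°, μ₂ ∈ H₂°}`. -/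
noncomputable def transportPrice (H₁ : Set (Ω₁ → ℝ≥0∞)) (H₂ : Set (Ω₂ → ℝ≥0∞))
    (f : Ω₁ × Ω₂ → ℝ≥0∞) : ℝ≥0∞ :=
  sSup {x : ℝ≥0∞ | ∃ μ ∈ marginalSet H₁ H₂, x = ∫⁻ ω, f ω ∂μ}

end Transport

open scoped Topology

/-! ### Capacitability of analytic sets -/

/-- Choquet's capacitability theorem in predicate form: if `T` is monotone and every increasing
union satisfying `T` has a member satisfying `T`, then an analytic set with `T` contains a compact
set all of whose open neighbourhoods satisfy `T`. With `T s` saying that the capacity of `s` exceeds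
a given level, continuity of the capacity on compact sets is not needed. -/
theorem choquet_analytic {E : Type*} [TopologicalSpace E] {T : Set E → Prop}
    (hmono : ∀ s t, s ⊆ t → T s → T t)
    (hcont : ∀ s : ℕ → Set E, Monotone s → T (⋃ n, s n) → ∃ n, T (s n))
    {A : Set E} (hA : AnalyticSet A) (hT : T A) :
    ∃ Q ⊆ A, IsCompact Q ∧ ∀ U, IsOpen U → Q ⊆ U → T U := by
  rw [AnalyticSet] at hA
  rcases hA with rfl | ⟨f, hf, rfl⟩
  · exact ⟨∅, Set.Subset.rfl, isCompact_empty, fun U _ hU => hmono _ _ hU hT⟩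
  -- `A` is a continuous image of Baire space; the first `k` coordinates are bounded one at a time.
  let B : ℕ → (ℕ → ℕ) → Set (ℕ → ℕ) := fun k b => {x | ∀ i < k, x i ≤ b i}
  have step : ∀ k b, T (f '' B k b) → ∃ m, T (f '' B (k + 1) (Function.update b k m)) := by
    intro k b h
    refine hcont (fun m => f '' B (k + 1) (Function.update b k m)) ?_ ?_
    · intro m m' hm
      refine Set.image_mono fun x hx i hi => (hx i hi).trans ?_
      by_cases hik : i = k
      · subst hik; simpa using hm
      · simp [hik]
    · refine hmono _ _ ?_ h
      rintro _ ⟨x, hx, rfl⟩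
      refine Set.mem_iUnion.2 ⟨x k, x, fun i hi => ?_, rfl⟩
      by_cases hik : i = k
      · subst hik; simp
      · simpa [hik] using hx i (by omega)
  choose! m hm using step
  let c : ℕ → (ℕ → ℕ) := fun k => Nat.rec (fun _ => 0) (fun k b => Function.update b k (m k b)) k
  have hc : ∀ k, c (k + 1) = Function.update (c k) k (m k (c k)) := fun k => rfl
  have hTc : ∀ k, T (f '' B k (c k)) := by
    intro k
    induction k with
    | zero => simpa [B] using hT
    | succ k ih => exact hm k _ ih
  let d : ℕ → ℕ := fun i => c (i + 1) i
  have hcd : ∀ k i, i < k → c k i = d i := by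
    intro k
    induction k with
    | zero => intro i hi; omega
    | succ k ih =>
      intro i hi
      by_cases hik : i = k
      · subst hik; rfl
      · rw [hc, Function.update_of_ne hik, ih i (by omega)]
  have hTd : ∀ k, T (f '' B k d) := by
    intro k
    have : B k d = B k (c k) := by
      ext x
      refine forall₂_congr fun i hi => ?_
      rw [hcd k i hi]
    rw [this]; exact hTc k
  have hcpt : ∀ M : ℕ → ℕ, IsCompact {x : ℕ → ℕ | ∀ i, x i ≤ M i} := by
    intro M
    have := isCompact_univ_pi (s := fun i => Set.Iic (M i))
      (fun i => (Set.finite_Iic (M i)).isCompact)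
    convert this using 1
    ext x; simp [Pi.le_def]
  refine ⟨f '' {x | ∀ i, x i ≤ d i}, Set.image_subset_range _ _, (hcpt d).image hf, ?_⟩
  intro U hU hQU
  by_contra hTU
  have : ∀ k, ∃ x ∈ B k d, f x ∉ U := by
    intro k
    by_contra! h
    exact hTU (hmono _ _ (Set.image_subset_iff.2 h) (hTd k))
  choose x hxB hxU using this
  -- The points `x k` satisfy the bound `d` only in the first `k` coordinates, but coordinate `i`
  -- of the sequence is bounded by `d i` plus its finitely many earlier values.
  obtain ⟨y, -, φ, hφ, hlim⟩ := (hcpt fun i => d i + ∑ k ∈ Finset.range (i + 1), x k i).tendsto_subseq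
    (x := x) (by
      intro k i
      by_cases hik : i < k
      · exact (hxB k i hik).trans (Nat.le_add_right _ _)
      · refine le_trans ?_ (Nat.le_add_left _ _)
        exact Finset.single_le_sum (f := fun k => x k i) (fun _ _ => Nat.zero_le _)
          (Finset.mem_range.2 (by omega)))
  have hy : ∀ i, y i ≤ d i := by
    intro i
    have h1 : Tendsto (fun k => (x (φ k)) i) atTop (𝓝 (y i)) := (tendsto_pi_nhds.1 hlim) i
    refine le_of_tendsto h1 ?_
    filter_upwards [eventually_gt_atTop i] with k hk
    exact hxB (φ k) i (hk.trans_le (hφ.id_le k))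
  have h2 : Tendsto (fun k => f (x (φ k))) atTop (𝓝 (f y)) := (hf.tendsto y).comp hlim
  obtain ⟨k, hk⟩ := (h2.eventually (hU.mem_nhds (hQU ⟨y, hy, rfl⟩))).exists
  exact hxU _ hk

/-! ### Forward convex combinations -/

/-- The function `x ↦ exp (-x)` on `[0,∞]`, with value `0` at `∞`, as a real number. -/
noncomputable def expNeg (x : ℝ≥0∞) : ℝ := (EReal.exp (-(x : EReal))).toReal

lemma expNeg_top : expNeg ⊤ = 0 := by simp [expNeg]

lemma expNeg_coe (x : ℝ≥0) : expNeg x = Real.exp (-x) := by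
  have : (-((x : ℝ≥0∞) : EReal)) = ((-(x : ℝ) : ℝ) : EReal) := by
    rw [EReal.coe_neg]; rfl
  rw [expNeg, this, EReal.exp_coe, ENNReal.toReal_ofReal (Real.exp_pos _).le]

lemma expNeg_nonneg (x : ℝ≥0∞) : 0 ≤ expNeg x := ENNReal.toReal_nonneg

lemma expNeg_le_one (x : ℝ≥0∞) : expNeg x ≤ 1 := by
  induction x with
  | top => simp [expNeg_top]
  | coe x => rw [expNeg_coe]; simp

lemma measurable_expNeg : Measurable expNeg := by
  unfold expNeg
  have : Continuous fun x : ℝ≥0∞ => EReal.exp (-(x : EReal)) :=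
    ENNReal.continuous_exp.comp (continuous_neg.comp continuous_coe_ennreal_ereal)
  exact this.measurable.ennreal_toReal

/-- Midpoints are turned into geometric means. This gives the parallelogram-type identity
`∫ (e^{-g} - e^{-g'})² = J g + J g' - 2 J ((g + g') / 2)` for `J g = ∫ (e^{-g})²`. -/
lemma expNeg_mid (x y : ℝ≥0∞) :
    expNeg ((2⁻¹ : ℝ≥0) • x + (2⁻¹ : ℝ≥0) • y) ^ 2 = expNeg x * expNeg y := by
  induction x with
  | top => simp [expNeg_top, ENNReal.smul_top]
  | coe x =>
    induction y with
    | top => simp [expNeg_top, ENNReal.smul_top]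
    | coe y =>
      have : (2⁻¹ : ℝ≥0) • (x : ℝ≥0∞) + (2⁻¹ : ℝ≥0) • (y : ℝ≥0∞)
          = ((2⁻¹ * x + 2⁻¹ * y : ℝ≥0) : ℝ≥0∞) := by
        simp [ENNReal.smul_def]
      rw [this, expNeg_coe, expNeg_coe, expNeg_coe, ← Real.exp_nat_mul, ← Real.exp_add]
      congr 1
      push_cast; ring

lemma recover_expNeg (x : ℝ≥0∞) :
    (-(ENNReal.log (ENNReal.ofReal (expNeg x)))).toENNReal = x := by
  rw [expNeg, ENNReal.ofReal_toReal, EReal.log_exp, neg_neg, EReal.toENNReal_coe]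
  rw [Ne, EReal.exp_eq_top_iff, EReal.neg_eq_top_iff]
  exact EReal.coe_ennreal_ne_bot x

/-- The limit exists in `[0,∞]`, including the value `∞` in case `l = 0`. -/
lemma tendsto_of_tendsto_expNeg {g : ℕ → ℝ≥0∞} {l : ℝ}
    (h : Tendsto (fun n => expNeg (g n)) atTop (𝓝 l)) : ∃ m, Tendsto g atTop (𝓝 m) := by
  have hc : Continuous fun r : ℝ => (-(ENNReal.log (ENNReal.ofReal r))).toENNReal :=
    EReal.continuous_toENNReal.comp (continuous_neg.comp
      (ENNReal.continuous_log.comp ENNReal.continuous_ofReal))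
  refine ⟨_, ((hc.tendsto l).comp h).congr fun n => recover_expNeg (g n)⟩

/-- Komlós-type lemma: some sequence of forward convex combinations of nonnegative measurable
functions converges almost everywhere in `[0,∞]`. Almost-minimizers of the functional
`J g = ∫ (e^{-g})²` over the forward convex hulls are chosen; by `expNeg_mid` they make
`e^{-g}` a Cauchy sequence in `L²`. -/
theorem forward_convex {Y : Type*} [MeasurableSpace Y] (ν : Measure Y) [IsFiniteMeasure ν]
    (h : ℕ → Y → ℝ≥0∞) (hm : ∀ n, Measurable (h n)) :
    ∃ g : ℕ → Y → ℝ≥0∞, (∀ n, g n ∈ convexHull ℝ≥0 (h '' Set.Ici n)) ∧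
      ∀ᵐ y ∂ν, ∃ l, Tendsto (fun n => g n y) atTop (𝓝 l) := by
  set C : ℕ → Set (Y → ℝ≥0∞) := fun n => convexHull ℝ≥0 (h '' Set.Ici n) with hC
  have hCanti : ∀ n m, n ≤ m → C m ⊆ C n := fun n m hnm =>
    convexHull_mono (Set.image_mono (Set.Ici_subset_Ici.2 hnm))
  have hCm : ∀ n, ∀ g ∈ C n, Measurable g := by
    intro n g hg
    refine convexHull_min (t := {g | Measurable g}) ?_ ?_ hg
    · rintro _ ⟨k, -, rfl⟩; exact hm k
    · intro u hu v hv a b _ _ _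
      exact (hu.const_smul a).add (hv.const_smul b)
  let J : (Y → ℝ≥0∞) → ℝ := fun g => ∫ y, expNeg (g y) ^ 2 ∂ν
  have hem : ∀ n, ∀ g ∈ C n, Measurable fun y => expNeg (g y) := fun n g hg =>
    measurable_expNeg.comp (hCm n g hg)
  have hintg : ∀ n, ∀ g ∈ C n, ∀ n', ∀ g' ∈ C n',
      Integrable (fun y => expNeg (g y) * expNeg (g' y)) ν := by
    intro n g hg n' g' hg'
    refine Integrable.of_bound ((hem n g hg).mul (hem n' g' hg')).aestronglyMeasurable 1 ?_
    refine Eventually.of_forall fun y => ?_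
    rw [Real.norm_eq_abs, abs_of_nonneg (mul_nonneg (expNeg_nonneg _) (expNeg_nonneg _))]
    exact mul_le_one₀ (expNeg_le_one _) (expNeg_nonneg _) (expNeg_le_one _)
  have hJ0 : ∀ g, 0 ≤ J g := fun g => integral_nonneg fun y => sq_nonneg _
  have hJ1 : ∀ n, ∀ g ∈ C n, J g ≤ ν.real Set.univ := by
    intro n g hg
    have : J g ≤ ∫ y, (1 : ℝ) ∂ν := by
      refine integral_mono ?_ (integrable_const _) fun y => ?_
      · simpa [pow_two] using hintg n g hg n g hg
      · exact pow_le_one₀ (expNeg_nonneg _) (expNeg_le_one _)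
    simpa using this
  have hne : ∀ n, (C n).Nonempty := fun n =>
    ⟨h n, subset_convexHull _ _ ⟨n, Set.mem_Ici.2 le_rfl, rfl⟩⟩
  have hbdd : ∀ n, BddBelow (J '' C n) := fun n => ⟨0, by rintro _ ⟨g, -, rfl⟩; exact hJ0 g⟩
  let I : ℕ → ℝ := fun n => sInf (J '' C n)
  have hIle : ∀ n, ∀ g ∈ C n, I n ≤ J g := fun n g hg => csInf_le (hbdd n) ⟨g, hg, rfl⟩
  have hIbdd : BddAbove (Set.range I) := by
    refine ⟨ν.real Set.univ, ?_⟩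
    rintro _ ⟨n, rfl⟩
    obtain ⟨g, hg⟩ := hne n
    exact (hIle n g hg).trans (hJ1 n g hg)
  have hImono : Monotone I := fun n m hnm =>
    csInf_le_csInf (hbdd n) ((hne m).image J) (Set.image_mono (hCanti n m hnm))
  set L : ℝ := ⨆ n, I n with hL
  -- The rate `4⁻ⁿ` makes the `L²` distances, its square roots up to a constant, summable.
  let δ : ℕ → ℝ := fun n => (1 / 4) ^ n
  have hδ : ∀ n, 0 < δ n := fun n => by positivity
  have hex : ∀ n, ∃ N, n ≤ N ∧ ∃ g ∈ C N, L - δ n < I N ∧ J g < L + δ n := by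
    intro n
    obtain ⟨N, hN⟩ := exists_lt_of_lt_ciSup (show L - δ n < ⨆ n, I n by rw [← hL]; linarith [hδ n])
    have h1 : I N ≤ I (max n N) := hImono (le_max_right _ _)
    have h2 : I (max n N) ≤ L := le_ciSup hIbdd _
    obtain ⟨_, ⟨g, hg, rfl⟩, hlt⟩ := exists_lt_of_csInf_lt ((hne (max n N)).image J)
      (show sInf (J '' C (max n N)) < L + δ n by
        have : I (max n N) < L + δ n := by linarith [hδ n]
        exact this)
    exact ⟨max n N, le_max_left _ _, g, hg, by linarith, hlt⟩
  choose N hnN g hg hIN hJg using hex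
  refine ⟨g, fun n => hCanti _ _ (hnN n) (hg n), ?_⟩
  have key : ∀ k n m, k ≤ n → k ≤ m →
      ∫ y, (expNeg (g n y) - expNeg (g m y)) ^ 2 ∂ν ≤ 4 * δ k := by
    intro k n m hkn hkm
    have hδn : δ n ≤ δ k := pow_le_pow_of_le_one (by norm_num) (by norm_num) hkn
    have hδm : δ m ≤ δ k := pow_le_pow_of_le_one (by norm_num) (by norm_num) hkm
    let mid : Y → ℝ≥0∞ := (2⁻¹ : ℝ≥0) • g n + (2⁻¹ : ℝ≥0) • g m
    have hmid : L - δ k ≤ J mid := by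
      have hconv : ∀ K, g n ∈ C K → g m ∈ C K → mid ∈ C K := fun K h1 h2 =>
        convex_convexHull ℝ≥0 _ h1 h2 (by simp) (by simp) (by
          rw [← NNReal.coe_inj]; push_cast; norm_num)
      rcases le_total (N n) (N m) with hle | hle
      · have := hIle _ _ (hconv (N n) (hg n) (hCanti _ _ hle (hg m)))
        linarith [hIN n]
      · have := hIle _ _ (hconv (N m) (hCanti _ _ hle (hg n)) (hg m))
        linarith [hIN m]
    have hJmid : J mid = ∫ y, expNeg (g n y) * expNeg (g m y) ∂ν :=
      integral_congr_ae (Eventually.of_forall fun y => expNeg_mid (g n y) (g m y))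
    have hexp : ∫ y, (expNeg (g n y) - expNeg (g m y)) ^ 2 ∂ν
        = J (g n) + J (g m) - 2 * J mid := by
      have e1 : J (g n) = ∫ y, expNeg (g n y) * expNeg (g n y) ∂ν := by simp only [J, pow_two]
      have e2 : J (g m) = ∫ y, expNeg (g m y) * expNeg (g m y) ∂ν := by simp only [J, pow_two]
      rw [hJmid, e1, e2, ← integral_const_mul, ← integral_add, ← integral_sub]
      · congr 1; ext y; ring
      · exact (hintg _ _ (hg n) _ _ (hg n)).add (hintg _ _ (hg m) _ _ (hg m))
      · exact (hintg _ _ (hg n) _ _ (hg m)).const_mul 2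
      · exact hintg _ _ (hg n) _ _ (hg n)
      · exact hintg _ _ (hg m) _ _ (hg m)
    rw [hexp]
    linarith [hJg n, hJg m]
  have hcau := Lp.ae_tendsto_of_cauchy_eLpNorm (μ := ν) (f := fun n y => expNeg (g n y)) (p := 2)
    (B := fun n => ENNReal.ofReal (3 * (1 / 2) ^ n))
    (fun n => (hem _ _ (hg n)).aestronglyMeasurable) (by norm_num) ?_ ?_
  · filter_upwards [hcau] with y hy
    obtain ⟨l, hl⟩ := hy
    exact tendsto_of_tendsto_expNeg hl
  · have : Summable fun n : ℕ => (3 : ℝ) * (1 / 2) ^ n :=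
      (summable_geometric_of_lt_one (by norm_num) (by norm_num)).mul_left 3
    exact this.tsum_ofReal_ne_top
  · intro k n m hkn hkm
    have hL2 : MemLp ((fun y => expNeg (g n y)) - fun y => expNeg (g m y)) 2 ν := by
      refine MemLp.of_bound ((hem _ _ (hg n)).sub (hem _ _ (hg m))).aestronglyMeasurable 1
        (Eventually.of_forall fun y => ?_)
      rw [Pi.sub_apply, Real.norm_eq_abs, abs_le]
      constructor <;> linarith [expNeg_nonneg (g n y), expNeg_le_one (g n y),
        expNeg_nonneg (g m y), expNeg_le_one (g m y)]
    rw [hL2.eLpNorm_eq_integral_rpow_norm (by norm_num) (by norm_num)]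
    refine (ENNReal.ofReal_lt_ofReal_iff (by positivity)).2 ?_
    have e : ∫ y, ‖((fun y => expNeg (g n y)) - fun y => expNeg (g m y)) y‖ ^ (2 : ℝ≥0∞).toReal ∂ν
        = ∫ y, (expNeg (g n y) - expNeg (g m y)) ^ 2 ∂ν := by
      congr 1; ext y; simp
    rw [e]
    have h4 : (4 : ℝ) * δ k = (2 * (1 / 2) ^ k) ^ 2 := by
      simp only [δ]
      rw [mul_pow, ← pow_mul, mul_comm k 2, pow_mul]; norm_num
    have hk := key k n m hkn hkm
    rw [h4] at hk
    have : (∫ y, (expNeg (g n y) - expNeg (g m y)) ^ 2 ∂ν) ^ ((2 : ℝ≥0∞).toReal)⁻¹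
        = √(∫ y, (expNeg (g n y) - expNeg (g m y)) ^ 2 ∂ν) := by
      rw [Real.sqrt_eq_rpow]; norm_num
    rw [this]
    calc _ ≤ √((2 * (1 / 2) ^ k) ^ 2) := Real.sqrt_le_sqrt hk
      _ = 2 * (1 / 2) ^ k := Real.sqrt_sq (by positivity)
      _ < 3 * (1 / 2) ^ k := by
        have : (0 : ℝ) < (1 / 2) ^ k := by positivity
        linarith

/-- Limits of dominating pairs: if `h₁ n ⊕ h₂ n` eventually dominates `r` at a point, then so does
`k₁ ⊕ k₂`, and the pair `(k₁, k₂)` inherits every eventual bound on the cost with respect to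
marginals absolutely continuous with respect to `ν₁`, `ν₂`. The first property holds at *every*
point. -/
theorem komlos_pair {Ω₁ Ω₂ : Type*} [MeasurableSpace Ω₁] [MeasurableSpace Ω₂]
    (ν₁ : Measure Ω₁) (ν₂ : Measure Ω₂) [IsFiniteMeasure ν₁] [IsFiniteMeasure ν₂]
    (h₁ : ℕ → Ω₁ → ℝ≥0∞) (h₂ : ℕ → Ω₂ → ℝ≥0∞)
    (hm₁ : ∀ n, Measurable (h₁ n)) (hm₂ : ∀ n, Measurable (h₂ n)) :
    ∃ (k₁ : Ω₁ → ℝ≥0∞) (k₂ : Ω₂ → ℝ≥0∞), Measurable k₁ ∧ Measurable k₂ ∧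
      (∀ ω₁ ω₂ r, (∀ᶠ n in atTop, r ≤ h₁ n ω₁ + h₂ n ω₂) → r ≤ k₁ ω₁ + k₂ ω₂) ∧
      ∀ (μ₁ : Measure Ω₁) (μ₂ : Measure Ω₂), μ₁ ≪ ν₁ → μ₂ ≪ ν₂ → ∀ c,
        (∀ᶠ n in atTop, ∫⁻ x, h₁ n x ∂μ₁ + ∫⁻ x, h₂ n x ∂μ₂ ≤ c) →
        ∫⁻ x, k₁ x ∂μ₁ + ∫⁻ x, k₂ x ∂μ₂ ≤ c := by
  -- The same convex weights have to be used for both components, so both are viewed as one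
  -- function on the disjoint union.
  let ν : Measure (Ω₁ ⊕ Ω₂) := ν₁.map Sum.inl + ν₂.map Sum.inr
  let h : ℕ → Ω₁ ⊕ Ω₂ → ℝ≥0∞ := fun n => Sum.elim (h₁ n) (h₂ n)
  have hm : ∀ n, Measurable (h n) := fun n => (hm₁ n).sumElim (hm₂ n)
  obtain ⟨g, hg, hlim⟩ := forward_convex ν h hm
  have hgm : ∀ n, Measurable (g n) := by
    intro n
    refine convexHull_min (t := {g | Measurable g}) ?_ ?_ (hg n)
    · rintro _ ⟨k, -, rfl⟩; exact hm k
    · intro u hu v hv a b _ _ _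
      exact (hu.const_smul a).add (hv.const_smul b)
  let N : Set (Ω₁ ⊕ Ω₂) := toMeasurable ν {y | ¬ ∃ l, Tendsto (fun n => g n y) atTop (𝓝 l)}
  have hNm : MeasurableSet N := measurableSet_toMeasurable _ _
  have hN0 : ν N = 0 := by rw [measure_toMeasurable]; exact hlim
  have hNlim : ∀ y ∉ N, ∃ l, Tendsto (fun n => g n y) atTop (𝓝 l) := by
    intro y hy
    by_contra hcon
    exact hy (subset_toMeasurable _ _ hcon)
  classical
  -- The value `∞` on the null set `N` is what makes the domination hold pointwise.
  let k : Ω₁ ⊕ Ω₂ → ℝ≥0∞ := N.piecewise (fun _ => ⊤) (fun y => limsup (fun n => g n y) atTop)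
  have hkm : Measurable k := Measurable.piecewise hNm measurable_const (Measurable.limsup hgm)
  have hkN : ∀ y ∈ N, k y = ⊤ := fun y hy => Set.piecewise_eq_of_mem _ _ _ hy
  have hkt : ∀ y ∉ N, Tendsto (fun n => g n y) atTop (𝓝 (k y)) := by
    intro y hy
    obtain ⟨l, hl⟩ := hNlim y hy
    have : k y = l := by rw [← hl.limsup_eq]; exact Set.piecewise_eq_of_notMem _ _ _ hy
    rwa [this]
  have hsum : ∀ (μ₁ : Measure Ω₁) (μ₂ : Measure Ω₂) (u : Ω₁ ⊕ Ω₂ → ℝ≥0∞), Measurable u →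
      ∫⁻ y, u y ∂(μ₁.map Sum.inl + μ₂.map Sum.inr)
        = ∫⁻ x, u (Sum.inl x) ∂μ₁ + ∫⁻ x, u (Sum.inr x) ∂μ₂ := by
    intro μ₁ μ₂ u hu
    rw [lintegral_add_measure, lintegral_map hu measurable_inl, lintegral_map hu measurable_inr]
  refine ⟨fun x => k (Sum.inl x), fun x => k (Sum.inr x), hkm.comp measurable_inl,
    hkm.comp measurable_inr, ?_, ?_⟩
  · intro ω₁ ω₂ r hr
    by_cases h1 : Sum.inl ω₁ ∈ N
    · simp [hkN _ h1]
    by_cases h2 : Sum.inr ω₂ ∈ N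
    · simp [hkN _ h2]
    refine ge_of_tendsto ((hkt _ h1).add (hkt _ h2)) ?_
    obtain ⟨n₀, hn₀⟩ := eventually_atTop.1 hr
    filter_upwards [eventually_ge_atTop n₀] with n hn
    refine convexHull_min (t := {g : Ω₁ ⊕ Ω₂ → ℝ≥0∞ | r ≤ g (Sum.inl ω₁) + g (Sum.inr ω₂)})
      ?_ ?_ (hg n)
    · rintro _ ⟨j, hj, rfl⟩
      exact hn₀ j (hn.trans hj)
    · intro u hu v hv a b _ _ hab
      simp only [Set.mem_ofPred_eq, Pi.add_apply, Pi.smul_apply] at hu hv ⊢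
      calc r = (a + b) • r := by rw [hab, one_smul]
        _ = a • r + b • r := add_smul _ _ _
        _ ≤ a • (u (Sum.inl ω₁) + u (Sum.inr ω₂)) + b • (v (Sum.inl ω₁) + v (Sum.inr ω₂)) := by
            gcongr
        _ = _ := by rw [smul_add, smul_add]; ac_rfl
  · intro μ₁ μ₂ hac₁ hac₂ c hc
    let μ : Measure (Ω₁ ⊕ Ω₂) := μ₁.map Sum.inl + μ₂.map Sum.inr
    have hμN : μ N = 0 := by
      have h0 : ν₁.map Sum.inl N + ν₂.map Sum.inr N = 0 := by
        rw [← Measure.add_apply]; exact hN0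
      rw [add_eq_zero] at h0
      have a1 := (hac₁.map measurable_inl) h0.1
      have a2 := (hac₂.map measurable_inr) h0.2
      rw [Measure.add_apply, a1, a2, add_zero]
    rw [← hsum μ₁ μ₂ k hkm]
    have hae : ∀ᵐ y ∂μ, k y = liminf (fun n => g n y) atTop := by
      have : ∀ᵐ y ∂μ, y ∉ N := measure_eq_zero_iff_ae_notMem.1 hμN
      filter_upwards [this] with y hy
      exact ((hkt y hy).liminf_eq).symm
    calc ∫⁻ y, k y ∂μ = ∫⁻ y, liminf (fun n => g n y) atTop ∂μ := lintegral_congr_ae hae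
      _ ≤ liminf (fun n => ∫⁻ y, g n y ∂μ) atTop := lintegral_liminf_le hgm
      _ ≤ c := by
        refine liminf_le_of_frequently_le' (Eventually.frequently ?_)
        obtain ⟨n₀, hn₀⟩ := eventually_atTop.1 hc
        filter_upwards [eventually_ge_atTop n₀] with n hn
        refine (convexHull_min
          (t := {g : Ω₁ ⊕ Ω₂ → ℝ≥0∞ | Measurable g ∧ ∫⁻ y, g y ∂μ ≤ c}) ?_ ?_ (hg n)).2
        · rintro _ ⟨j, hj, rfl⟩
          refine ⟨hm j, ?_⟩
          rw [hsum μ₁ μ₂ _ (hm j)]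
          exact hn₀ j (hn.trans hj)
        · rintro u ⟨hum, hu⟩ v ⟨hvm, hv⟩ a b _ _ hab
          refine ⟨(hum.const_smul a).add (hvm.const_smul b), ?_⟩
          have : ∫⁻ y, (a • u + b • v) y ∂μ = a • ∫⁻ y, u y ∂μ + b • ∫⁻ y, v y ∂μ := by
            simp only [Pi.add_apply, Pi.smul_apply, ENNReal.smul_def, smul_eq_mul]
            rw [lintegral_add_left (hum.const_mul _), lintegral_const_mul _ hum,
              lintegral_const_mul _ hvm]
          rw [this]
          calc _ ≤ a • c + b • c := by gcongr
            _ = c := by rw [← add_smul, hab, one_smul]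

section

variable {Ω₁ Ω₂ X : Type*} [MeasurableSpace Ω₁] [MeasurableSpace Ω₂]

/-! ### Domination by `h₁ ⊕ h₂` and a compact set obstructing it -/

/-- `Dom P₁ P₂ e₁ e₂ g c`: the function `g` on `X` is dominated by `h₁ ∘ e₁ + h₂ ∘ e₂` for some
measurable `h₁`, `h₂` whose joint cost `∫ h₁ dμ₁ + ∫ h₂ dμ₂` is at most `c` for all `μᵢ ∈ Pᵢ`.
The space `X`, with maps to the two factors, stands for a compact subset of the product. -/
def Dom (P₁ : Set (Measure Ω₁)) (P₂ : Set (Measure Ω₂)) (e₁ : X → Ω₁) (e₂ : X → Ω₂)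
    (g : X → ℝ≥0∞) (c : ℝ≥0∞) : Prop :=
  ∃ (h₁ : Ω₁ → ℝ≥0∞) (h₂ : Ω₂ → ℝ≥0∞), Measurable h₁ ∧ Measurable h₂ ∧
    (∀ x, g x ≤ h₁ (e₁ x) + h₂ (e₂ x)) ∧
    ∀ μ₁ ∈ P₁, ∀ μ₂ ∈ P₂, ∫⁻ x, h₁ x ∂μ₁ + ∫⁻ x, h₂ x ∂μ₂ ≤ c

variable {P₁ : Set (Measure Ω₁)} {P₂ : Set (Measure Ω₂)} {e₁ : X → Ω₁} {e₂ : X → Ω₂}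

lemma Dom.mono {g g' : X → ℝ≥0∞} {c c' : ℝ≥0∞} (hg : ∀ x, g x ≤ g' x) (hc : c ≤ c')
    (h : Dom P₁ P₂ e₁ e₂ g' c) : Dom P₁ P₂ e₁ e₂ g c' := by
  obtain ⟨h₁, h₂, hm₁, hm₂, hle, hP⟩ := h
  exact ⟨h₁, h₂, hm₁, hm₂, fun x => (hg x).trans (hle x),
    fun μ₁ hμ₁ μ₂ hμ₂ => (hP μ₁ hμ₁ μ₂ hμ₂).trans hc⟩

/-- If a Borel function `f` is not dominated at cost `c`, this is already witnessed by a compact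
piece `Q` of its graph: no continuous `u` strictly above `Q` is dominated at cost `c`. -/
theorem exists_compact_not_dom [TopologicalSpace X] [PolishSpace X] [MeasurableSpace X]
    [BorelSpace X] {ν₁ : Measure Ω₁} {ν₂ : Measure Ω₂} [IsFiniteMeasure ν₁] [IsFiniteMeasure ν₂]
    (hP₁ : ∀ μ ∈ P₁, μ ≪ ν₁) (hP₂ : ∀ μ ∈ P₂, μ ≪ ν₂)
    {f : X → ℝ≥0∞} (hf : Measurable f) {c : ℝ≥0∞} (hnd : ¬ Dom P₁ P₂ e₁ e₂ f c) :
    ∃ Q : Set (X × ℝ≥0∞), IsCompact Q ∧ (∀ p ∈ Q, p.2 = f p.1) ∧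
      ∀ u : X → ℝ≥0∞, Continuous u → (∀ p ∈ Q, p.2 < u p.1) → ¬ Dom P₁ P₂ e₁ e₂ u c := by
  -- `s B` is the upper envelope of the set `B`; the capacity-like predicate is `¬ Dom (s B) c`.
  let s : Set (X × ℝ≥0∞) → X → ℝ≥0∞ := fun B x => ⨆ t, ⨆ _ : (x, t) ∈ B, t
  have hs : ∀ B x t, (x, t) ∈ B → t ≤ s B x := fun B x t h => le_iSup₂ (f := fun t _ => t) t h
  have hsmono : ∀ B B', B ⊆ B' → ∀ x, s B x ≤ s B' x := fun B B' h x =>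
    iSup₂_le fun t ht => hs B' x t (h ht)
  have hA : AnalyticSet ((fun x => (x, f x)) '' (Set.univ : Set X)) :=
    MeasurableSet.univ.analyticSet_image (measurable_id.prodMk hf)
  have hcont : ∀ B : ℕ → Set (X × ℝ≥0∞), Monotone B →
      ¬ Dom P₁ P₂ e₁ e₂ (s (⋃ n, B n)) c → ∃ n, ¬ Dom P₁ P₂ e₁ e₂ (s (B n)) c := by
    intro B hB hT
    by_contra! hcon
    choose h₁ h₂ hm₁ hm₂ hle hc using hcon
    obtain ⟨k₁, k₂, hk₁, hk₂, hk, hkc⟩ := komlos_pair ν₁ ν₂ h₁ h₂ hm₁ hm₂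
    refine hT ⟨k₁, k₂, hk₁, hk₂, fun x => iSup₂_le fun t ht => ?_, fun μ₁ hμ₁ μ₂ hμ₂ =>
      hkc μ₁ μ₂ (hP₁ μ₁ hμ₁) (hP₂ μ₂ hμ₂) c (Eventually.of_forall fun n => hc n μ₁ hμ₁ μ₂ hμ₂)⟩
    obtain ⟨n, hn⟩ := Set.mem_iUnion.1 ht
    refine hk _ _ t ?_
    filter_upwards [eventually_ge_atTop n] with j hj
    exact (hs _ _ _ (hB hj hn)).trans (hle j x)
  have hTA : ¬ Dom P₁ P₂ e₁ e₂ (s ((fun x => (x, f x)) '' Set.univ)) c := fun hD =>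
    hnd (hD.mono (fun x => hs ((fun x => (x, f x)) '' Set.univ) x (f x) ⟨x, trivial, rfl⟩) le_rfl)
  obtain ⟨Q, hQA, hQ, hU⟩ := choquet_analytic (T := fun B => ¬ Dom P₁ P₂ e₁ e₂ (s B) c)
    (fun B B' h hB hB' => hB (hB'.mono (hsmono B B' h) le_rfl)) hcont hA
    hTA
  refine ⟨Q, hQ, ?_, ?_⟩
  · intro p hp
    obtain ⟨x, -, rfl⟩ := hQA hp
    rfl
  · intro u hu hQu hD
    refine hU {p | p.2 < u p.1} (isOpen_lt continuous_snd (hu.comp continuous_fst)) hQu ?_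
    exact hD.mono (fun x => iSup₂_le fun t ht => le_of_lt ht) le_rfl

end

/-! ### Passing between continuous and Borel functions -/

/-- For a regular monotone set, membership in the polar can be tested on its bounded continuous
elements: a bounded Borel function is approximated in integral from below by upper
semicontinuous ones, which belong to `H` by monotonicity. -/
theorem mem_polar_of_continuous {Ω : Type*} [MetricSpace Ω] [MeasurableSpace Ω] [BorelSpace Ω]
    {H : Set (Ω → ℝ≥0∞)} (hmeas : ∀ f ∈ H, Measurable f) (hmono : MonotoneSet H)
    (hreg : RegularSet H) (μ : Measure Ω) [IsFiniteMeasure μ]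
    (hμ : ∀ h ∈ H, IsCb h → ∫⁻ x, h x ∂μ ≤ 1) : μ ∈ polar H := by
  refine ⟨inferInstance, fun h hh => ?_⟩
  have hub : ∀ g ∈ H, IsUb g → ∫⁻ x, g x ∂μ ≤ 1 := by
    intro g hg hgu
    have h1 : ∫⁻ x, g x ∂μ ≤ sSup {x : ℝ≥0∞ | ∃ h ∈ H, IsUb h ∧ x = ∫⁻ ω, h ω ∂μ} :=
      le_sSup ⟨g, hg, hgu, rfl⟩
    rw [hreg μ inferInstance] at h1
    refine h1.trans (sSup_le ?_)
    rintro _ ⟨k, hk, hkc, rfl⟩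
    exact hμ k hk hkc
  have htr : ∀ n : ℕ, ∫⁻ x, min (h x) n ∂μ ≤ 1 := by
    intro n
    let f : Ω → ℝ≥0 := fun x => (min (h x) n).toNNReal
    have hfe : ∀ x, (f x : ℝ≥0∞) = min (h x) n := fun x =>
      ENNReal.coe_toNNReal (ne_top_of_le_ne_top (ENNReal.natCast_ne_top n) (min_le_right _ _))
    have hfin : ∫⁻ x, f x ∂μ ≠ ∞ := by
      refine ne_top_of_le_ne_top (b := (n : ℝ≥0∞) * μ Set.univ)
        (ENNReal.mul_ne_top (ENNReal.natCast_ne_top n) (measure_ne_top _ _)) ?_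
      rw [← lintegral_const]
      exact lintegral_mono fun x => by rw [hfe]; exact min_le_right _ _
    simp_rw [← hfe]
    refine ENNReal.le_of_forall_pos_le_add fun ε hε _ => ?_
    obtain ⟨g, hgf, hgu, hgi⟩ := exists_upperSemicontinuous_le_lintegral_le (μ := μ) f hfin
      (ε := ε) (by exact_mod_cast hε.ne')
    have hgu' : UpperSemicontinuous fun x => (g x : ℝ≥0∞) :=
      ENNReal.continuous_coe.comp_upperSemicontinuous hgu ENNReal.coe_mono
    have hgH : (fun x => (g x : ℝ≥0∞)) ∈ H := by
      refine hmono _ hgu'.measurable ⟨h, hh, fun x => ?_⟩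
      calc (g x : ℝ≥0∞) ≤ f x := by exact_mod_cast hgf x
        _ ≤ h x := by rw [hfe]; exact min_le_left _ _
    refine hgi.trans ?_
    gcongr
    refine hub _ hgH ⟨hgu', n, fun x => ?_⟩
    calc (g x : ℝ≥0∞) ≤ f x := by exact_mod_cast hgf x
      _ ≤ n := by rw [hfe]; exact min_le_right _ _
      _ = _ := by simp
  have hsup : ∀ x, h x = ⨆ n : ℕ, min (h x) n := by
    intro x
    refine le_antisymm ?_ (iSup_le fun n => min_le_left _ _)
    refine le_of_tendsto' (f := fun n : ℕ => min (h x) (n : ℝ≥0∞)) (x := atTop) ?_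
      (b := ⨆ n : ℕ, min (h x) n) (fun n => le_iSup (fun n : ℕ => min (h x) (n : ℝ≥0∞)) n)
    simpa using (tendsto_const_nhds (x := h x)).min ENNReal.tendsto_nat_nhds_top
  rw [lintegral_congr hsup]
  rw [lintegral_iSup (fun n => (hmeas h hh).min measurable_const)]
  · exact iSup_le htr
  · intro n m hnm x
    exact min_le_min_left _ (by exact_mod_cast hnm)

/-- Uniformly bounded continuous functions strictly above a compact piece `Q` of the graph of `f`
with upper limit at most `f` everywhere (off the projection of `Q` the upper limit is `0`). -/
theorem exists_continuous_approx {X : Type*} [MetricSpace X] {Q : Set (X × ℝ≥0∞)}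
    (hQ : IsCompact Q) {f : X → ℝ≥0∞} (hQf : ∀ p ∈ Q, p.2 = f p.1) {N : ℝ≥0}
    (hN : ∀ x, f x ≤ N) :
    ∃ v : ℕ → X → ℝ≥0∞, (∀ n, Continuous (v n)) ∧ (∀ n x, v n x ≤ N + 1) ∧
      (∀ n, ∀ p ∈ Q, p.2 < v n p.1) ∧ ∀ x, limsup (fun n => v n x) atTop ≤ f x := by
  -- `w n` is the smallest nonnegative `n`-Lipschitz function above `Q`.
  let w : ℕ → X → ℝ≥0∞ := fun n x => ⨆ p ∈ Q, (p.2 - n * edist x p.1)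
  have hw : ∀ n x, ∀ p ∈ Q, p.2 - n * edist x p.1 ≤ w n x := fun n x p hp =>
    le_iSup₂ (f := fun (p : X × ℝ≥0∞) (_ : p ∈ Q) => p.2 - n * edist x p.1) p hp
  have hwN : ∀ n x, w n x ≤ N := fun n x => iSup₂_le fun p hp =>
    tsub_le_self.trans ((hQf p hp).trans_le (hN _))
  have hwc : ∀ n, Continuous (w n) := by
    intro n
    refine continuous_of_le_add_edist n (ENNReal.natCast_ne_top n) fun x y => ?_
    refine iSup₂_le fun p hp => ?_
    rw [tsub_le_iff_right]
    calc p.2 ≤ (p.2 - n * edist y p.1) + n * edist y p.1 := le_tsub_add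
      _ ≤ w n y + n * (edist x y + edist x p.1) := by
          gcongr
          · exact hw n y p hp
          · rw [edist_comm x y]; exact edist_triangle _ _ _
      _ = _ := by rw [mul_add, add_assoc]
  have hinv : Tendsto (fun n : ℕ => ((n : ℝ≥0∞) + 1)⁻¹) atTop (𝓝 0) := by
    have := ENNReal.tendsto_inv_nat_nhds_zero.comp (tendsto_add_atTop_nat 1)
    refine this.congr fun n => ?_
    simp
  refine ⟨fun n x => w n x + ((n : ℝ≥0∞) + 1)⁻¹, fun n => (hwc n).add continuous_const, ?_, ?_, ?_⟩
  · intro n x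
    exact add_le_add (hwN n x) (ENNReal.inv_le_one.2 le_add_self)
  · intro n p hp
    have h1 : p.2 ≤ w n p.1 := by simpa using hw n p.1 p hp
    have hfin : w n p.1 ≠ ⊤ := ne_top_of_le_ne_top ENNReal.coe_ne_top (hwN n p.1)
    refine h1.trans_lt (ENNReal.lt_add_right hfin ?_)
    exact ENNReal.inv_ne_zero.2 (by finiteness)
  · intro x
    refine le_of_forall_gt_imp_ge_of_dense fun a ha => ?_
    have hF : IsClosed (Prod.fst '' (Q ∩ {p | a ≤ p.2})) :=
      ((hQ.inter_right (isClosed_le continuous_const continuous_snd)).image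
        continuous_fst).isClosed
    have hx : x ∈ (Prod.fst '' (Q ∩ {p | a ≤ p.2}))ᶜ := by
      rintro ⟨p, ⟨hp, hpa⟩, rfl⟩
      rw [Set.mem_ofPred_eq, hQf p hp] at hpa
      exact absurd ha (not_lt.2 hpa)
    obtain ⟨ε, hε, hball⟩ := EMetric.mem_nhds_iff.1 (hF.isOpen_compl.mem_nhds hx)
    obtain ⟨n₀, hn₀⟩ := ENNReal.exists_nat_mul_gt (a := ε) (b := N) hε.ne' ENNReal.coe_ne_top
    have hev : ∀ᶠ n in atTop, w n x ≤ a := by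
      filter_upwards [eventually_ge_atTop n₀] with n hn
      refine iSup₂_le fun p hp => ?_
      by_cases hpa : p.2 ≤ a
      · exact tsub_le_self.trans hpa
      · have hd : ε ≤ edist x p.1 := by
          by_contra! hlt
          refine hball (show p.1 ∈ Metric.eball x ε by rwa [Metric.mem_eball, edist_comm]) ?_
          exact ⟨p, ⟨hp, (not_le.1 hpa).le⟩, rfl⟩
        have : p.2 ≤ n * edist x p.1 :=
          calc p.2 ≤ N := (hQf p hp).trans_le (hN _)
            _ ≤ n₀ * ε := hn₀.le
            _ ≤ n * edist x p.1 := by gcongr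
        rw [tsub_eq_zero_of_le this]
        exact zero_le
    have hlim : Tendsto (fun n : ℕ => a + ((n : ℝ≥0∞) + 1)⁻¹) atTop (𝓝 a) := by
      simpa using (tendsto_const_nhds (x := a)).add hinv
    rw [← hlim.limsup_eq]
    refine limsup_le_limsup ?_
    filter_upwards [hev] with n hn
    gcongr

/-! ### Duality on a compact space -/

/-- If a bounded Borel function `f` on a compact space is not dominated at cost `1`, then some
finite measure with both marginals in the polars satisfies `∫ f dμ ≥ 1`. -/
theorem dual_compact {Ω₁ Ω₂ X : Type*}
    [MetricSpace Ω₁] [MeasurableSpace Ω₁] [BorelSpace Ω₁]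
    [MetricSpace Ω₂] [MeasurableSpace Ω₂] [BorelSpace Ω₂]
    [MetricSpace X] [CompactSpace X] [MeasurableSpace X] [BorelSpace X]
    {H₁ : Set (Ω₁ → ℝ≥0∞)} {H₂ : Set (Ω₂ → ℝ≥0∞)}
    (hmeas₁ : ∀ f ∈ H₁, Measurable f) (hmeas₂ : ∀ f ∈ H₂, Measurable f)
    (hmono₁ : MonotoneSet H₁) (hmono₂ : MonotoneSet H₂)
    (hreg₁ : RegularSet H₁) (hreg₂ : RegularSet H₂)
    {ν₁ : Measure Ω₁} {ν₂ : Measure Ω₂} [IsFiniteMeasure ν₁] [IsFiniteMeasure ν₂]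
    (hdom₁ : ∀ μ ∈ polar H₁, μ ≪ ν₁) (hdom₂ : ∀ μ ∈ polar H₂, μ ≪ ν₂)
    {e₁ : X → Ω₁} {e₂ : X → Ω₂} (he₁ : Continuous e₁) (he₂ : Continuous e₂) (m : ℕ)
    {f : X → ℝ≥0∞} (hf : Measurable f) {N : ℝ≥0} (hN : ∀ x, f x ≤ N)
    (hnd : ¬ Dom {μ | μ ∈ polar H₁ ∧ μ Set.univ ≤ m} (polar H₂) e₁ e₂ f 1) :
    ∃ μ : Measure X, IsFiniteMeasure μ ∧ μ.map e₁ ∈ polar H₁ ∧ μ.map e₂ ∈ polar H₂ ∧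
      1 ≤ ∫⁻ x, f x ∂μ := by
  obtain ⟨Q, hQ, hQf, hQD⟩ := exists_compact_not_dom
    (fun μ hμ => hdom₁ μ hμ.1) hdom₂ hf hnd
  set D : (X → ℝ≥0∞) → ℝ≥0∞ → Prop :=
    Dom {μ | μ ∈ polar H₁ ∧ μ Set.univ ≤ m} (polar H₂) e₁ e₂ with hD
  let A : Set C(X, ℝ) := {u | ∃ c < 1, D (fun x => ENNReal.ofReal (u x)) c}
  let S : Set C(X, ℝ) := {u | ∀ p ∈ Q, p.2.toReal < u p.1}
  have hQfin : ∀ p ∈ Q, p.2 ≠ ⊤ := fun p hp =>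
    ne_top_of_le_ne_top ENNReal.coe_ne_top ((hQf p hp).trans_le (hN _))
  -- If `v ≤ u + ε`, then `ε` is added to `h₁`; the mass bound `m` on the first marginals makes the
  -- additional cost at most `ε * m`.
  have hAo : IsOpen A := by
    rw [Metric.isOpen_iff]
    rintro u ⟨c, hc, h₁, h₂, hm₁, hm₂, hle, hP⟩
    obtain ⟨ε, hε, hεm⟩ := ENNReal.exists_nnreal_pos_mul_lt (ENNReal.natCast_ne_top m)
      (tsub_pos_of_lt hc).ne'
    refine ⟨ε, hε, fun v hv => ⟨c + ε * m, by rwa [add_comm, ← lt_tsub_iff_right], fun x => h₁ x + ε,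
      h₂, hm₁.add_const _, hm₂, fun x => ?_, fun μ₁ hμ₁ μ₂ hμ₂ => ?_⟩⟩
    · have hd : v x ≤ u x + ε := by
        have := (ContinuousMap.dist_apply_le_dist (f := v) (g := u) x).trans_lt hv
        rw [Real.dist_eq] at this
        linarith [(abs_lt.1 this).2]
      calc ENNReal.ofReal (v x) ≤ ENNReal.ofReal (u x) + ENNReal.ofReal ε :=
            (ENNReal.ofReal_le_ofReal hd).trans ENNReal.ofReal_add_le
        _ ≤ (h₁ (e₁ x) + h₂ (e₂ x)) + ε := by
            rw [ENNReal.ofReal_coe_nnreal]; gcongr; exact hle x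
        _ = _ := by ring
    · rw [lintegral_add_right _ measurable_const, lintegral_const]
      calc _ = (∫⁻ x, h₁ x ∂μ₁ + ∫⁻ x, h₂ x ∂μ₂) + ε * μ₁ Set.univ := by ring
        _ ≤ _ := by gcongr; exacts [hP μ₁ hμ₁ μ₂ hμ₂, hμ₁.2]
  have hAc : Convex ℝ A := by
    rintro u ⟨c, hc, h₁, h₂, hm₁, hm₂, hle, hP⟩ v ⟨d, hd, k₁, k₂, hk₁, hk₂, hkle, hkP⟩ a b ha hb hab
    refine ⟨max c d, max_lt hc hd, fun x => ENNReal.ofReal a * h₁ x + ENNReal.ofReal b * k₁ x,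
      fun x => ENNReal.ofReal a * h₂ x + ENNReal.ofReal b * k₂ x, (hm₁.const_mul _).add (hk₁.const_mul _),
      (hm₂.const_mul _).add (hk₂.const_mul _), fun x => ?_, fun μ₁ hμ₁ μ₂ hμ₂ => ?_⟩
    · calc ENNReal.ofReal ((a • u + b • v) x)
          ≤ ENNReal.ofReal (a * u x) + ENNReal.ofReal (b * v x) := by
            simpa using ENNReal.ofReal_add_le (p := a * u x) (q := b * v x)
        _ = ENNReal.ofReal a * ENNReal.ofReal (u x) + ENNReal.ofReal b * ENNReal.ofReal (v x) := by
            rw [ENNReal.ofReal_mul ha, ENNReal.ofReal_mul hb]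
        _ ≤ ENNReal.ofReal a * (h₁ (e₁ x) + h₂ (e₂ x))
            + ENNReal.ofReal b * (k₁ (e₁ x) + k₂ (e₂ x)) := by
            gcongr; exacts [hle x, hkle x]
        _ = _ := by ring
    · rw [lintegral_add_left (hm₁.const_mul _), lintegral_add_left (hm₂.const_mul _),
        lintegral_const_mul _ hm₁, lintegral_const_mul _ hm₂, lintegral_const_mul _ hk₁,
        lintegral_const_mul _ hk₂]
      calc _ = ENNReal.ofReal a * (∫⁻ x, h₁ x ∂μ₁ + ∫⁻ x, h₂ x ∂μ₂)
            + ENNReal.ofReal b * (∫⁻ x, k₁ x ∂μ₁ + ∫⁻ x, k₂ x ∂μ₂) := by ring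
        _ ≤ ENNReal.ofReal a * max c d + ENNReal.ofReal b * max c d := by
            gcongr
            exacts [(hP μ₁ hμ₁ μ₂ hμ₂).trans (le_max_left _ _),
              (hkP μ₁ hμ₁ μ₂ hμ₂).trans (le_max_right _ _)]
        _ = _ := by rw [← add_mul, ← ENNReal.ofReal_add ha hb, hab, ENNReal.ofReal_one, one_mul]
  have hSc : Convex ℝ S := by
    intro u hu v hv a b ha hb hab p hp
    have h1 := hu p hp
    have h2 := hv p hp
    simp only [ContinuousMap.add_apply, ContinuousMap.smul_apply, smul_eq_mul]
    have e : p.2.toReal = a * p.2.toReal + b * p.2.toReal := by rw [← add_mul, hab, one_mul]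
    rcases ha.lt_or_eq with ha' | rfl
    · nlinarith
    · simp only [zero_add] at hab
      subst hab
      linarith
  have hAS : Disjoint A S := by
    rw [Set.disjoint_left]
    rintro u ⟨c, hc, hu⟩ huS
    refine hQD (fun x => ENNReal.ofReal (u x)) (ENNReal.continuous_ofReal.comp u.continuous)
      (fun p hp => ?_) (hu.mono (fun _ => le_rfl) hc.le)
    rw [ENNReal.lt_ofReal_iff_toReal_lt (hQfin p hp)]
    exact huS p hp
  obtain ⟨L, s, hLA, hLS⟩ := geometric_hahn_banach_open hAc hAo hSc hAS
  have hA0 : ∀ u : C(X, ℝ), (∀ x, u x ≤ 0) → u ∈ A := fun u hu =>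
    ⟨0, zero_lt_one, fun _ => 0, fun _ => 0, measurable_const, measurable_const,
      fun x => by simp [ENNReal.ofReal_of_nonpos (hu x)], fun _ _ _ _ => by simp⟩
  have hs : 0 < s := by simpa using hLA 0 (hA0 0 fun x => by simp)
  -- Nonpositive functions generate a cone inside `A`, on which `L` is bounded above.
  have hLneg : ∀ u : C(X, ℝ), (∀ x, u x ≤ 0) → L u ≤ 0 := by
    intro u hu
    by_contra! hpos
    have := hLA ((s / L u) • u) (hA0 _ fun x => by
      simpa using mul_nonpos_of_nonneg_of_nonpos (by positivity) (hu x))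
    rw [map_smul, smul_eq_mul, div_mul_cancel₀ _ hpos.ne'] at this
    exact this.false
  -- The functional `s⁻¹ L` is at most `1` on `A` and at least `1` on `S`.
  let Λ₀ : CompactlySupportedContinuousMap X ℝ →ₗ[ℝ] ℝ :=
    { toFun := fun u => s⁻¹ * L u.toContinuousMap
      map_add' := fun u v => by
        rw [← mul_add, ← map_add]; rfl
      map_smul' := fun a u => by
        have : (a • u).toContinuousMap = a • u.toContinuousMap := rfl
        rw [this, map_smul]; simp; ring }
  let Λ : CompactlySupportedContinuousMap X ℝ →ₚ[ℝ] ℝ := PositiveLinearMap.mk₀ Λ₀ (by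
    intro u hu
    have h1 := hLneg (-u.toContinuousMap) fun x => by simpa using hu x
    rw [map_neg] at h1
    exact mul_nonneg (inv_nonneg.2 hs.le) (by linarith))
  let μ := RealRMK.rieszMeasure Λ
  have hμfin : IsFiniteMeasure μ := ⟨isCompact_univ.measure_lt_top⟩
  have hμ : ∀ u : C(X, ℝ), ∫ x, u x ∂μ = s⁻¹ * L u := fun u =>
    RealRMK.integral_rieszMeasure Λ ⟨u, HasCompactSupport.of_compactSpace u⟩
  have hintg : ∀ u : C(X, ℝ), (∀ x, 0 ≤ u x) →
      ∫⁻ x, ENNReal.ofReal (u x) ∂μ = ENNReal.ofReal (s⁻¹ * L u) := fun u hu => by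
    rw [← hμ, ofReal_integral_eq_lintegral_ofReal
      (u.continuous.integrable_of_hasCompactSupport (HasCompactSupport.of_compactSpace u))
      (Eventually.of_forall hu)]
  have hlift : ∀ v : X → ℝ≥0∞, Continuous v → (∀ x, v x ≠ ⊤) →
      ∃ u : C(X, ℝ), (∀ x, 0 ≤ u x) ∧ (∀ x, u x = (v x).toReal) ∧
        ∀ x, ENNReal.ofReal (u x) = v x := fun v hv hvt =>
    ⟨⟨fun x => (v x).toReal, continuous_iff_continuousAt.2 fun x =>
      (ENNReal.tendsto_toReal (hvt x)).comp hv.continuousAt⟩, fun x => ENNReal.toReal_nonneg,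
      fun x => rfl, fun x => ENNReal.ofReal_toReal (hvt x)⟩
  have hcheap : ∀ v : X → ℝ≥0∞, Continuous v → (∀ x, v x ≠ ⊤) →
      (∀ r : ℝ≥0, r < 1 → D (fun x => r * v x) r) → ∫⁻ x, v x ∂μ ≤ 1 := by
    intro v hv hvt hr
    rw [← one_mul (∫⁻ x, v x ∂μ)]
    refine ENNReal.mul_le_of_forall_lt fun a ha b hb => ?_
    lift a to ℝ≥0 using (ha.trans ENNReal.one_lt_top).ne
    obtain ⟨u, hu0, -, hu⟩ := hlift (fun x => a * v x)
      (ENNReal.continuous_const_mul ENNReal.coe_ne_top |>.comp hv)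
      (fun x => ENNReal.mul_ne_top ENNReal.coe_ne_top (hvt x))
    have huA : u ∈ A := ⟨a, ha, (hr a (by exact_mod_cast ha)).mono (fun x => (hu x).le) le_rfl⟩
    calc (a : ℝ≥0∞) * b ≤ a * ∫⁻ x, v x ∂μ := by gcongr
      _ = ∫⁻ x, ENNReal.ofReal (u x) ∂μ := by
          rw [← lintegral_const_mul _ hv.measurable]; simp_rw [hu]
      _ = ENNReal.ofReal (s⁻¹ * L u) := hintg u hu0
      _ ≤ 1 := by
          rw [ENNReal.ofReal_le_one, inv_mul_le_iff₀ hs, mul_one]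
          exact (hLA u huA).le
  have hpol₁ : μ.map e₁ ∈ polar H₁ := by
    refine mem_polar_of_continuous hmeas₁ hmono₁ hreg₁ _ fun h hh hhc => ?_
    rw [lintegral_map (hmeas₁ h hh) he₁.measurable]
    obtain ⟨hc, C, hC⟩ := hhc
    refine hcheap (fun x => h (e₁ x)) (hc.comp he₁)
      (fun x => ne_top_of_le_ne_top ENNReal.coe_ne_top (hC _)) fun r _ => ?_
    refine ⟨fun x => r * h x, fun _ => 0, (hmeas₁ h hh).const_mul _, measurable_const,
      fun x => by simp, fun μ₁ hμ₁ μ₂ _ => ?_⟩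
    rw [lintegral_const_mul _ (hmeas₁ h hh), lintegral_zero, add_zero]
    exact mul_le_of_le_one_right' (hμ₁.1.2 h hh)
  have hpol₂ : μ.map e₂ ∈ polar H₂ := by
    refine mem_polar_of_continuous hmeas₂ hmono₂ hreg₂ _ fun h hh hhc => ?_
    rw [lintegral_map (hmeas₂ h hh) he₂.measurable]
    obtain ⟨hc, C, hC⟩ := hhc
    refine hcheap (fun x => h (e₂ x)) (hc.comp he₂)
      (fun x => ne_top_of_le_ne_top ENNReal.coe_ne_top (hC _)) fun r _ => ?_
    refine ⟨fun _ => 0, fun x => r * h x, measurable_const, (hmeas₂ h hh).const_mul _,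
      fun x => by simp, fun μ₁ _ μ₂ hμ₂ => ?_⟩
    rw [lintegral_const_mul _ (hmeas₂ h hh), lintegral_zero, zero_add]
    exact mul_le_of_le_one_right' (hμ₂.2 h hh)
  refine ⟨μ, hμfin, hpol₁, hpol₂, ?_⟩
  obtain ⟨v, hvc, hvN, hvQ, hvf⟩ := exists_continuous_approx hQ hQf hN
  have hv1 : ∀ n, 1 ≤ ∫⁻ x, v n x ∂μ := by
    intro n
    have hvt : ∀ x, v n x ≠ ⊤ := fun x => ne_top_of_le_ne_top (by finiteness) (hvN n x)
    obtain ⟨u, hu0, hut, hu⟩ := hlift (v n) (hvc n) hvt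
    have huS : u ∈ S := fun p hp => by
      rw [hut, ENNReal.toReal_lt_toReal (hQfin p hp) (hvt _)]
      exact hvQ n p hp
    calc (1 : ℝ≥0∞) ≤ ENNReal.ofReal (s⁻¹ * L u) := by
          rw [ENNReal.one_le_ofReal, ← div_eq_inv_mul, one_le_div hs]
          exact hLS u huS
      _ = ∫⁻ x, ENNReal.ofReal (u x) ∂μ := (hintg u hu0).symm
      _ = _ := by simp_rw [hu]
  calc (1 : ℝ≥0∞) ≤ limsup (fun n => ∫⁻ x, v n x ∂μ) atTop :=
        le_limsup_of_frequently_le (Frequently.of_forall hv1)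
    _ ≤ ∫⁻ x, limsup (fun n => v n x) atTop ∂μ :=
        limsup_lintegral_le (fun _ => (N : ℝ≥0∞) + 1) (fun n => (hvc n).measurable)
          (fun n => Eventually.of_forall (hvN n)) (by
            rw [lintegral_const]
            exact ENNReal.mul_ne_top (by finiteness) (measure_ne_top _ _))
    _ ≤ _ := lintegral_mono hvf

/-! ### The transport problem on the product -/

lemma lintegral_le_priceH {Ω : Type*} [TopologicalSpace Ω] [MeasurableSpace Ω]
    {H : Set (Ω → ℝ≥0∞)} {μ : Measure Ω} (hμ : μ ∈ polar H) (f : Ω → ℝ≥0∞) :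
    ∫⁻ x, f x ∂μ ≤ priceH H f :=
  le_sSup ⟨μ, hμ, rfl⟩

lemma lintegral_le_one_of_mem_transportSet {Ω₁ Ω₂ : Type*}
    [TopologicalSpace Ω₁] [MeasurableSpace Ω₁] [TopologicalSpace Ω₂] [MeasurableSpace Ω₂]
    {H₁ : Set (Ω₁ → ℝ≥0∞)} {H₂ : Set (Ω₂ → ℝ≥0∞)} {f : Ω₁ × Ω₂ → ℝ≥0∞}
    (hf : f ∈ transportSet H₁ H₂) {μ : Measure (Ω₁ × Ω₂)} (hμ : μ ∈ marginalSet H₁ H₂) :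
    ∫⁻ ω, f ω ∂μ ≤ 1 := by
  obtain ⟨-, h₁, h₂, hm₁, hm₂, hle, hpr⟩ := hf
  obtain ⟨-, hμ₁, hμ₂⟩ := hμ
  calc ∫⁻ ω, f ω ∂μ ≤ ∫⁻ ω, (h₁ ω.1 + h₂ ω.2) ∂μ := lintegral_mono hle
    _ = ∫⁻ x, h₁ x ∂(μ.map Prod.fst) + ∫⁻ x, h₂ x ∂(μ.map Prod.snd) := by
        rw [lintegral_add_left (f := fun ω : Ω₁ × Ω₂ => h₁ ω.1) (hm₁.comp measurable_fst),
          lintegral_map hm₁ measurable_fst, lintegral_map hm₂ measurable_snd]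
    _ ≤ priceH H₁ h₁ + priceH H₂ h₂ :=
        add_le_add (lintegral_le_priceH hμ₁ h₁) (lintegral_le_priceH hμ₂ h₂)
    _ ≤ 1 := hpr

/-- For `⊆`, the functions `h ⊕ 0` and `0 ⊕ h` with `h ∈ Hᵢ` belong to the transport set. -/
theorem polar_transportSet {Ω₁ Ω₂ : Type*}
    [TopologicalSpace Ω₁] [MeasurableSpace Ω₁] [TopologicalSpace Ω₂] [MeasurableSpace Ω₂]
    {H₁ : Set (Ω₁ → ℝ≥0∞)} {H₂ : Set (Ω₂ → ℝ≥0∞)}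
    (hmeas₁ : ∀ f ∈ H₁, Measurable f) (hmeas₂ : ∀ f ∈ H₂, Measurable f) :
    polar (transportSet H₁ H₂) = marginalSet H₁ H₂ := by
  refine Set.Subset.antisymm ?_ fun μ hμ =>
    ⟨hμ.1, fun f hf => lintegral_le_one_of_mem_transportSet hf hμ⟩
  rintro μ ⟨hfin, hμ⟩
  refine ⟨hfin, ⟨inferInstance, fun h hh => ?_⟩, ⟨inferInstance, fun h hh => ?_⟩⟩
  · rw [lintegral_map (hmeas₁ h hh) measurable_fst]
    refine hμ (fun ω => h ω.1) ⟨(hmeas₁ h hh).comp measurable_fst, h, fun _ => 0, hmeas₁ h hh,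
      measurable_const, fun ω => by simp, ?_⟩
    have h2 : priceH H₂ (fun _ => 0) ≤ 0 := sSup_le (by rintro _ ⟨ρ, -, rfl⟩; simp)
    have h1 : priceH H₁ h ≤ 1 := sSup_le (by rintro _ ⟨ρ, hρ, rfl⟩; exact hρ.2 h hh)
    simpa using add_le_add h1 h2
  · rw [lintegral_map (hmeas₂ h hh) measurable_snd]
    refine hμ (fun ω => h ω.2) ⟨(hmeas₂ h hh).comp measurable_snd, fun _ => 0, h,
      measurable_const, hmeas₂ h hh, fun ω => by simp, ?_⟩
    have h2 : priceH H₁ (fun _ => 0) ≤ 0 := sSup_le (by rintro _ ⟨ρ, -, rfl⟩; simp)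
    have h1 : priceH H₂ h ≤ 1 := sSup_le (by rintro _ ⟨ρ, hρ, rfl⟩; exact hρ.2 h hh)
    simpa using add_le_add h2 h1

/-- The substantial inclusion of the duality: price at most `1` implies domination at cost `1`. -/
theorem mem_transportSet_of_price_le {Ω₁ Ω₂ : Type*}
    [MetricSpace Ω₁] [SigmaCompactSpace Ω₁] [MeasurableSpace Ω₁] [BorelSpace Ω₁]
    [MetricSpace Ω₂] [SigmaCompactSpace Ω₂] [MeasurableSpace Ω₂] [BorelSpace Ω₂]
    {H₁ : Set (Ω₁ → ℝ≥0∞)} {H₂ : Set (Ω₂ → ℝ≥0∞)}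
    (hmeas₁ : ∀ f ∈ H₁, Measurable f) (hmeas₂ : ∀ f ∈ H₂, Measurable f)
    (hmono₁ : MonotoneSet H₁) (hmono₂ : MonotoneSet H₂)
    (hreg₁ : RegularSet H₁) (hreg₂ : RegularSet H₂)
    {ν₁ : Measure Ω₁} {ν₂ : Measure Ω₂} [IsFiniteMeasure ν₁] [IsFiniteMeasure ν₂]
    (hdom₁ : ∀ μ ∈ polar H₁, μ ≪ ν₁) (hdom₂ : ∀ μ ∈ polar H₂, μ ≪ ν₂)
    {f : Ω₁ × Ω₂ → ℝ≥0∞} (hf : Measurable f) (hprice : transportPrice H₁ H₂ f ≤ 1) :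
    f ∈ transportSet H₁ H₂ := by
  -- In `[0,∞]`, `lam 0 = 1 - ∞ = 0`, so that `lam n < 1` for every `n`.
  let lam : ℕ → ℝ≥0∞ := fun n => 1 - (n : ℝ≥0∞)⁻¹
  have hlam : ∀ n, lam n < 1 := fun n =>
    ENNReal.sub_lt_self ENNReal.one_ne_top one_ne_zero
      (ENNReal.inv_ne_zero.2 (ENNReal.natCast_ne_top n))
  have hlamlim : Tendsto lam atTop (𝓝 1) := by
    simpa [lam] using ENNReal.Tendsto.sub (tendsto_const_nhds (x := (1 : ℝ≥0∞)))
      ENNReal.tendsto_inv_nat_nhds_zero (Or.inl ENNReal.one_ne_top)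
  have hstep : ∀ n : ℕ, Dom {μ | μ ∈ polar H₁ ∧ μ Set.univ ≤ n} (polar H₂)
      (fun x : compactCovering (Ω₁ × Ω₂) n => x.1.1) (fun x => x.1.2)
      (fun x => lam n * min (f x.1) n) 1 := by
    intro n
    by_contra hnd
    have : CompactSpace (compactCovering (Ω₁ × Ω₂) n) :=
      isCompact_iff_compactSpace.1 (isCompact_compactCovering _ n)
    obtain ⟨μ, hfin, hμ₁, hμ₂, h1⟩ := dual_compact hmeas₁ hmeas₂ hmono₁ hmono₂ hreg₁ hreg₂
      hdom₁ hdom₂ (continuous_fst.comp continuous_subtype_val)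
      (continuous_snd.comp continuous_subtype_val) n
      (((hf.comp measurable_subtype_coe).min measurable_const).const_mul (lam n)) (N := n)
      (fun x => by
        simpa using mul_le_mul' (hlam n).le (min_le_right (f x.1) (n : ℝ≥0∞))) hnd
    have hmem : μ.map Subtype.val ∈ marginalSet H₁ H₂ := by
      refine ⟨inferInstance, ?_, ?_⟩
      · rw [Measure.map_map measurable_fst measurable_subtype_coe]; exact hμ₁
      · rw [Measure.map_map measurable_snd measurable_subtype_coe]; exact hμ₂
    refine (hlam n).not_ge ?_
    calc (1 : ℝ≥0∞) ≤ _ := h1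
      _ ≤ ∫⁻ x, lam n * f x.1 ∂μ := lintegral_mono fun x => by
          gcongr; exact min_le_left _ _
      _ = lam n * ∫⁻ ω, f ω ∂(μ.map Subtype.val) := by
          rw [lintegral_const_mul (f := fun x : compactCovering (Ω₁ × Ω₂) n => f x.1) _
              (hf.comp measurable_subtype_coe),
            lintegral_map hf measurable_subtype_coe]
      _ ≤ lam n * 1 := by
          gcongr
          exact (le_sSup ⟨_, hmem, rfl⟩ : _ ≤ transportPrice H₁ H₂ f).trans hprice
      _ = lam n := mul_one _
  choose h₁ h₂ hm₁ hm₂ hle hcost using hstep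
  obtain ⟨k₁, k₂, hk₁, hk₂, hk, hkc⟩ := komlos_pair ν₁ ν₂ h₁ h₂ hm₁ hm₂
  refine ⟨hf, k₁, k₂, hk₁, hk₂, fun ω => ?_, ?_⟩
  · refine le_of_forall_lt_imp_le_of_dense fun r hr => hk _ _ r ?_
    have hlim : Tendsto (fun n : ℕ => lam n * min (f ω) n) atTop (𝓝 (f ω)) := by
      have hmin : Tendsto (fun n : ℕ => min (f ω) (n : ℝ≥0∞)) atTop (𝓝 (f ω)) := by
        simpa using (tendsto_const_nhds (x := f ω)).min ENNReal.tendsto_nat_nhds_top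
      simpa using ENNReal.Tendsto.mul hlamlim (Or.inl one_ne_zero) hmin
        (Or.inr ENNReal.one_ne_top)
    obtain ⟨n₀, hn₀⟩ := exists_mem_compactCovering ω
    filter_upwards [hlim.eventually_const_lt hr, eventually_ge_atTop n₀] with n hn hn'
    exact hn.le.trans (hle n ⟨ω, compactCovering_subset _ hn' hn₀⟩)
  · have hpair : ∀ μ₁ ∈ polar H₁, ∀ μ₂ ∈ polar H₂,
        ∫⁻ x, k₁ x ∂μ₁ + ∫⁻ x, k₂ x ∂μ₂ ≤ 1 := by
      intro μ₁ hμ₁ μ₂ hμ₂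
      refine hkc μ₁ μ₂ (hdom₁ _ hμ₁) (hdom₂ _ hμ₂) 1 ?_
      have := hμ₁.1
      obtain ⟨n₀, hn₀⟩ := ENNReal.exists_nat_gt (measure_ne_top μ₁ Set.univ)
      filter_upwards [eventually_ge_atTop n₀] with n hn
      exact hcost n μ₁ ⟨hμ₁, hn₀.le.trans (by exact_mod_cast hn)⟩ μ₂ hμ₂
    have e₁ : priceH H₁ k₁ = ⨆ μ : polar H₁, ∫⁻ x, k₁ x ∂μ.1 :=
      le_antisymm (sSup_le (by
        rintro _ ⟨μ, hμ, rfl⟩; exact le_iSup (fun μ : polar H₁ => ∫⁻ x, k₁ x ∂μ.1) ⟨μ, hμ⟩))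
        (iSup_le fun μ => lintegral_le_priceH μ.2 k₁)
    have e₂ : priceH H₂ k₂ = ⨆ μ : polar H₂, ∫⁻ x, k₂ x ∂μ.1 :=
      le_antisymm (sSup_le (by
        rintro _ ⟨μ, hμ, rfl⟩; exact le_iSup (fun μ : polar H₂ => ∫⁻ x, k₂ x ∂μ.1) ⟨μ, hμ⟩))
        (iSup_le fun μ => lintegral_le_priceH μ.2 k₂)
    have : Nonempty (polar H₁) := ⟨⟨0, inferInstance, fun _ _ => by simp⟩⟩
    have : Nonempty (polar H₂) := ⟨⟨0, inferInstance, fun _ _ => by simp⟩⟩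
    rw [e₁, e₂]
    exact ENNReal.iSup_add_iSup_le fun μ₁ μ₂ => hpair μ₁.1 μ₁.2 μ₂.1 μ₂.2


/-- **Theorem 4.1** in Bartl–Kupper, "A pointwise bipolar theorem" (transport duality with
non-tight marginals): let `Ω₁, Ω₂` be σ-compact metric spaces, let `Hᵢ ⊆ L⁰₊(Ωᵢ)` be
nonempty, monotone, convex, regular and closed under `liminf`, and suppose that for
`i = 1,2` there is `μᵢ* ∈ ca₊(Ωᵢ)` with `μᵢ ≪ μᵢ*` for all `μᵢ ∈ Hᵢ°`.  Then
`H = {f ∈ L⁰₊(Ω₁ × Ω₂) : π(f) ≤ 1}`; in particular `H = H°°` and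
`H° = {μ ∈ ca₊(Ω₁ × Ω₂) : μ₁ ∈ H₁°, μ₂ ∈ H₂°}`. -/
theorem transport_duality
    {Ω₁ Ω₂ : Type*}
    [MetricSpace Ω₁] [SigmaCompactSpace Ω₁] [MeasurableSpace Ω₁] [BorelSpace Ω₁]
    [MetricSpace Ω₂] [SigmaCompactSpace Ω₂] [MeasurableSpace Ω₂] [BorelSpace Ω₂]
    (H₁ : Set (Ω₁ → ℝ≥0∞)) (H₂ : Set (Ω₂ → ℝ≥0∞))
    (hmeas₁ : ∀ f ∈ H₁, Measurable f) (hmeas₂ : ∀ f ∈ H₂, Measurable f)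
    (hne₁ : H₁.Nonempty) (hne₂ : H₂.Nonempty)
    (hmono₁ : MonotoneSet H₁) (hmono₂ : MonotoneSet H₂)
    (hconv₁ : ConvexSet H₁) (hconv₂ : ConvexSet H₂)
    (hreg₁ : RegularSet H₁) (hreg₂ : RegularSet H₂)
    (hliminf₁ : LiminfClosed H₁) (hliminf₂ : LiminfClosed H₂)
    (hdom₁ : ∃ ν₁ : Measure Ω₁, IsFiniteMeasure ν₁ ∧ ∀ μ ∈ polar H₁, μ ≪ ν₁)
    (hdom₂ : ∃ ν₂ : Measure Ω₂, IsFiniteMeasure ν₂ ∧ ∀ μ ∈ polar H₂, μ ≪ ν₂) :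
    transportSet H₁ H₂ =
        {f : Ω₁ × Ω₂ → ℝ≥0∞ | Measurable f ∧ transportPrice H₁ H₂ f ≤ 1} ∧
      transportSet H₁ H₂ = bipolar (transportSet H₁ H₂) ∧
      polar (transportSet H₁ H₂) = marginalSet H₁ H₂ := by
  obtain ⟨ν₁, hν₁, hd₁⟩ := hdom₁
  obtain ⟨ν₂, hν₂, hd₂⟩ := hdom₂
  have hpol := polar_transportSet hmeas₁ hmeas₂
  have hmain : ∀ f : Ω₁ × Ω₂ → ℝ≥0∞, Measurable f → transportPrice H₁ H₂ f ≤ 1 →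
      f ∈ transportSet H₁ H₂ := fun f hf hp =>
    mem_transportSet_of_price_le hmeas₁ hmeas₂ hmono₁ hmono₂ hreg₁ hreg₂ hd₁ hd₂ hf hp
  refine ⟨Set.Subset.antisymm (fun f hf => ⟨hf.1, sSup_le ?_⟩) fun f hf => hmain f hf.1 hf.2,
    Set.Subset.antisymm (fun f hf => ⟨hf.1, fun μ hμ => hμ.2 f hf⟩)
      fun f hf => hmain f hf.1 (sSup_le ?_), hpol⟩
  · rintro _ ⟨μ, hμ, rfl⟩
    exact lintegral_le_one_of_mem_transportSet hf hμ
  · rintro _ ⟨μ, hμ, rfl⟩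
    exact hf.2 μ (hpol ▸ hμ)
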